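/- Let a, b, c, α be integers with gcd(a,b) = 1, b ≠ 0 and (a + b)·α = c, and let l be a natural number. Then for an integer x there exists a chain e_0, e_1, ..., e_l for the LDE a·x + b·y = c with e_0 = x (i.e. integers e_0, ..., e_l with e_0 = x and a·e_k + b·e_{k+1} = c for all 0 ≤ k < l) if and only if b^l divides (x - α). -/

import Mathlib

/-!
Subtracting the constant solution `α` turns a chain for `a * x + b * y = c` into one for
`a * x + b * y = 0`. Along a homogeneous chain `d` each step trades a factor `a` for a factor `-b`,
so `a ^ l * d 0 = (-b) ^ l * d l`, and coprimality forces `b ^ l ∣ d 0`. Conversely, a multiple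
`b ^ l * t` starts the geometric chain in which each step replaces one factor `b` by `-a`.
-/

section LDEChain

variable {R : Type*} [CommRing R] {a b c α : R} {l : ℕ}

/-- The terms `e 0, …, e l` form a chain of length `l` for the linear Diophantine equation
`a * x + b * y = c`: consecutive terms are solutions. A chain is encoded by an infinite sequence
whose terms beyond index `l` are unconstrained. -/
def IsLDEChain (a b c : R) (l : ℕ) (e : ℕ → R) : Prop :=
  ∀ k < l, a * e k + b * e (k + 1) = c

theorem isLDEChain_sub_const_iff (hα : (a + b) * α = c) {e : ℕ → R} :
    IsLDEChain a b 0 l (fun k => e k - α) ↔ IsLDEChain a b c l e := by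
  refine forall₂_congr fun k _ => ?_
  have shift : a * (e k - α) + b * (e (k + 1) - α) = a * e k + b * e (k + 1) - c := by
    rw [← hα]
    ring
  rw [shift, sub_eq_zero]

theorem exists_isLDEChain_iff_exists_homogeneous (hα : (a + b) * α = c) {x : R} :
    (∃ e : ℕ → R, e 0 = x ∧ IsLDEChain a b c l e) ↔
      ∃ d : ℕ → R, d 0 = x - α ∧ IsLDEChain a b 0 l d := by
  constructor
  · rintro ⟨e, rfl, he⟩
    exact ⟨fun k => e k - α, rfl, (isLDEChain_sub_const_iff hα).2 he⟩
  · rintro ⟨d, hd_zero, hd⟩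
    refine ⟨fun k => d k + α, eq_sub_iff_add_eq.1 hd_zero, ?_⟩
    rw [← isLDEChain_sub_const_iff hα]
    simpa only [add_sub_cancel_right] using hd

theorem IsLDEChain.pow_mul_eq_neg_pow_mul {d : ℕ → R} (hd : IsLDEChain a b 0 l d) :
    a ^ l * d 0 = (-b) ^ l * d l := by
  induction l with
  | zero => simp
  | succ l ih =>
    have init : a ^ l * d 0 = (-b) ^ l * d l := ih fun k hk => hd k (hk.trans l.lt_succ_self)
    have last : a * d l = -b * d (l + 1) := by linear_combination hd l l.lt_succ_self
    calc a ^ (l + 1) * d 0 = a * (a ^ l * d 0) := by ring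
      _ = (-b) ^ l * (a * d l) := by rw [init]; ring
      _ = (-b) ^ (l + 1) * d (l + 1) := by rw [last]; ring

theorem IsLDEChain.pow_dvd_apply_zero (hab : IsCoprime a b) {d : ℕ → R}
    (hd : IsLDEChain a b 0 l d) : b ^ l ∣ d 0 := by
  have hdvd : b ^ l ∣ a ^ l * d 0 := by
    rw [hd.pow_mul_eq_neg_pow_mul]
    exact (pow_dvd_pow_of_dvd (dvd_neg.2 dvd_rfl) l).mul_right (d l)
  exact hab.symm.pow.dvd_of_dvd_mul_left hdvd

theorem isLDEChain_geometric (a b t : R) (l : ℕ) :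
    IsLDEChain a b 0 l (fun k => (-a) ^ k * b ^ (l - k) * t) := by
  intro k hk
  have hexp : l - k = l - (k + 1) + 1 := by omega
  simp only [hexp, pow_succ]
  ring

theorem exists_homogeneous_isLDEChain_iff_pow_dvd (hab : IsCoprime a b) {x : R} :
    (∃ d : ℕ → R, d 0 = x ∧ IsLDEChain a b 0 l d) ↔ b ^ l ∣ x := by
  constructor
  · rintro ⟨d, rfl, hd⟩
    exact hd.pow_dvd_apply_zero hab
  · rintro ⟨t, rfl⟩
    exact ⟨_, by simp, isLDEChain_geometric a b t l⟩

theorem lde_chain_from_seed_iff_general (hab : IsCoprime a b) (hα : (a + b) * α = c) (l : ℕ)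
    (x : R) : (∃ e : ℕ → R, e 0 = x ∧ IsLDEChain a b c l e) ↔ b ^ l ∣ x - α :=
  (exists_isLDEChain_iff_exists_homogeneous hα).trans
    (exists_homogeneous_isLDEChain_iff_pow_dvd hab)

end LDEChain

/-- A chain of length `l` for the LDE `a*x + b*y = c` starting at `x` exists
iff `b^l ∣ (x - α)`, where `α` is the fixed point with `(a + b) * α = c`. -/
theorem lde_chain_from_seed_iff (a b c α : ℤ)
    (hgcd : Int.gcd a b = 1) (hb : b ≠ 0)
    (hα : (a + b) * α = c) (l : ℕ) (x : ℤ) :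
    (∃ e : ℕ → ℤ, e 0 = x ∧ ∀ k < l, a * e k + b * e (k + 1) = c) ↔
      b ^ l ∣ (x - α) :=
  lde_chain_from_seed_iff_general (Int.isCoprime_iff_gcd_eq_one.2 hgcd) hα l x
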